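/- Let N ≥ 0, C > 0, and let h : ℝ → ℝ be differentiable with |h'(x)| ≤ C·⟨x⟩^N for all x ∈ ℝ, and suppose A := ∫_ℝ e^{|h(t)|}/(1+t²) dt < ∞. Then there exists a constant C' > 0 (depending on C, N, A and h(0)) such that e^{|h(x)|} ≤ C'·⟨x⟩^{N+2} for all x ∈ ℝ; in particular both e^{h(x)} ≤ C'·⟨x⟩^{N+2} and e^{−h(x)} ≤ C'·⟨x⟩^{N+2} hold for all x. -/

import Mathlib

/-!
The derivative bound says that `h` varies by at most a constant `K = C * 2 ^ N` on the interval
`[x, x + r]` of length `r = ⟨x⟩ ^ (-N) ≤ 1`, because `⟨t⟩ ≤ 2 ⟨x⟩` there. Hence on that interval the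
integrand `exp |h t| / (1 + t ^ 2)` is at least `exp (|h x| - K) / (4 ⟨x⟩ ^ 2)`, and integrating
over the interval gives `exp |h x| ≤ 4 * exp K * A * ⟨x⟩ ^ (N + 2)`, where `A` is the full integral.
-/

open MeasureTheory

/-- The Japanese bracket `⟨x⟩ = (1 + x²)^(1/2)`. -/
noncomputable def brak (x : ℝ) : ℝ := Real.sqrt (1 + x ^ 2)

lemma one_le_brak (x : ℝ) : 1 ≤ brak x := by
  unfold brak
  rw [Real.one_le_sqrt]
  nlinarith [sq_nonneg x]

lemma brak_sq (x : ℝ) : brak x ^ 2 = 1 + x ^ 2 := by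
  unfold brak
  exact Real.sq_sqrt (by positivity)

/-- The bracket is at most doubled by a translation of length at most one. -/
lemma brak_le_two_mul {x t : ℝ} (h₀ : x ≤ t) (h₁ : t ≤ x + 1) : brak t ≤ 2 * brak x := by
  refine (sq_le_sq₀ (by linarith [one_le_brak t]) (by linarith [one_le_brak x])).1 ?_
  rw [mul_pow, brak_sq, brak_sq]
  nlinarith [sq_nonneg (2 * x - t), sq_nonneg x, mul_nonneg (sub_nonneg.2 h₀) (sub_nonneg.2 h₁)]

/-- On the interval `[x, x + ⟨x⟩ ^ (-N)]` the function `h` varies by at most `C * 2 ^ N`. -/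
lemma abs_sub_le_of_mem {N C : ℝ} {h : ℝ → ℝ} (hN : 0 ≤ N) (hC : 0 < C)
    (hdiff : Differentiable ℝ h) (hh' : ∀ x : ℝ, |deriv h x| ≤ C * brak x ^ N) {x t : ℝ}
    (ht : t ∈ Set.Icc x (x + (brak x ^ N)⁻¹)) : |h t - h x| ≤ C * 2 ^ N := by
  have hb := one_le_brak x
  have hp : 1 ≤ brak x ^ N := Real.one_le_rpow hb hN
  have hr : (brak x ^ N)⁻¹ ≤ 1 := inv_le_one_of_one_le₀ hp
  have hr0 : 0 < (brak x ^ N)⁻¹ := by positivity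
  have key := (convex_Icc x (x + (brak x ^ N)⁻¹)).norm_image_sub_le_of_norm_deriv_le
    (f := h) (C := C * (2 ^ N * brak x ^ N)) (fun y _ => hdiff y) (fun y hy => by
      rw [Real.norm_eq_abs]
      refine (hh' y).trans ?_
      rw [← Real.mul_rpow (by norm_num) (by linarith)]
      have := one_le_brak y
      have := brak_le_two_mul hy.1 (hy.2.trans (by linarith))
      gcongr) (Set.left_mem_Icc.2 (by linarith)) ht
  rw [Real.norm_eq_abs, Real.norm_eq_abs, abs_of_nonneg (sub_nonneg.2 ht.1)] at key
  calc |h t - h x| ≤ C * (2 ^ N * brak x ^ N) * (t - x) := key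
    _ ≤ C * (2 ^ N * brak x ^ N) * (brak x ^ N)⁻¹ := by
      gcongr
      linarith [ht.2]
    _ = C * 2 ^ N := by field_simp

theorem stmt11 (N C : ℝ) (h : ℝ → ℝ) (hN : 0 ≤ N) (hC : 0 < C)
    (hdiff : Differentiable ℝ h)
    (hh' : ∀ x : ℝ, |deriv h x| ≤ C * brak x ^ N)
    (hint : Integrable (fun t : ℝ => Real.exp |h t| / (1 + t ^ 2))) :
    ∃ C' : ℝ, 0 < C' ∧ ∀ x : ℝ,
      Real.exp |h x| ≤ C' * brak x ^ (N + 2) ∧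
      Real.exp (h x) ≤ C' * brak x ^ (N + 2) ∧
      Real.exp (-h x) ≤ C' * brak x ^ (N + 2) := by
  set A := ∫ t : ℝ, Real.exp |h t| / (1 + t ^ 2) with hA
  have hA0 : 0 ≤ A := integral_nonneg fun t => by positivity
  set K := C * 2 ^ N with hK
  -- Adding `1` makes positivity of the constant immediate, without showing `A > 0`.
  have hC' : 0 < 4 * Real.exp K * A + 1 := by positivity
  refine ⟨4 * Real.exp K * A + 1, hC', fun x => ?_⟩
  suffices hmain : Real.exp |h x| ≤ (4 * Real.exp K * A + 1) * brak x ^ (N + 2) from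
    ⟨hmain, (Real.exp_le_exp.2 (le_abs_self _)).trans hmain,
      (Real.exp_le_exp.2 (neg_le_abs _)).trans hmain⟩
  have hb := one_le_brak x
  have hb0 : 0 < brak x := by linarith
  have hp : 1 ≤ brak x ^ N := Real.one_le_rpow hb hN
  have hr : (brak x ^ N)⁻¹ ≤ 1 := inv_le_one_of_one_le₀ hp
  have hr0 : 0 < (brak x ^ N)⁻¹ := by positivity
  have hlow : ∀ t ∈ Set.Icc x (x + (brak x ^ N)⁻¹),
      Real.exp (|h x| - K) / (4 * brak x ^ 2) ≤ Real.exp |h t| / (1 + t ^ 2) := by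
    intro t ht
    have h1 := abs_sub_le_of_mem hN hC hdiff hh' ht
    have h2 : |h x| - |h t| ≤ |h t - h x| := by
      rw [abs_sub_comm]
      exact abs_sub_abs_le_abs_sub _ _
    have h3 : 1 + t ^ 2 ≤ 4 * brak x ^ 2 := by
      have := brak_le_two_mul ht.1 (ht.2.trans (by linarith))
      have := one_le_brak t
      rw [← brak_sq t]
      nlinarith
    gcongr
    linarith
  have hI : Real.exp (|h x| - K) / (4 * brak x ^ 2) * (brak x ^ N)⁻¹ ≤ A := by
    have h1 := setIntegral_ge_of_const_le_real measurableSet_Icc (by simp) hlow hint.integrableOn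
    have h2 : ∫ t in Set.Icc x (x + (brak x ^ N)⁻¹), Real.exp |h t| / (1 + t ^ 2) ≤ A :=
      setIntegral_le_integral hint (Filter.Eventually.of_forall fun t => by positivity)
    refine le_trans ?_ (h1.trans h2)
    rw [Real.volume_real_Icc_of_le (by linarith)]
    simp
  have hpow : brak x ^ (N + 2) = brak x ^ N * brak x ^ 2 := by
    rw [Real.rpow_add hb0, Real.rpow_two]
  calc Real.exp |h x|
      = 4 * Real.exp K * (Real.exp (|h x| - K) / (4 * brak x ^ 2) * (brak x ^ N)⁻¹)
          * brak x ^ (N + 2) := by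
        rw [hpow, Real.exp_sub]
        field_simp
    _ ≤ 4 * Real.exp K * A * brak x ^ (N + 2) := by gcongr
    _ ≤ (4 * Real.exp K * A + 1) * brak x ^ (N + 2) := by
        gcongr
        linarith
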